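/- Let q ≥ 1 and n > 2^q − 1, and let X : Matrix (Fin q) (Fin n) (ZMod 2) be a matrix all of whose columns are nonzero. Write v = n / (2^q − 1) and w = n % (2^q − 1). Then the number of unordered pairs {j, k} of distinct indices with differing columns of X equals φ_max = C(n, 2) − v·w − (2^q − 1)·C(v, 2) if and only if the multiset of columns of X consists of v + 1 copies of each of w distinct nonzero vectors in Fin q → ZMod 2 and v copies of each of the remaining 2^q − 1 − w nonzero vectors; that is, for every nonzero c : Fin q → ZMod 2, the number of j with column j equal to c is v or v + 1, and the number of such c with multiplicity v + 1 is exactly w. -/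

import Mathlib

/-!
Let `m = 2 ^ q - 1`, `v = n / m`, `w = n % m`, and let `μ c` be the multiplicity of a nonzero
vector `c` among the columns. Splitting the `n ^ 2` ordered pairs of indices according to whether
the columns agree gives `2 * D + ∑ μ c ^ 2 = n ^ 2`, where `D` is the number of unordered pairs with
differing columns (`two_mul_card_ne_add_sum_sq`). Since `∑ μ c = n = m * v + w`, this says
`2 * (φ_max - D) = ∑ (μ c - v) * (μ c - v - 1)`. Every summand is a product of two consecutive
integers, hence nonnegative, so `D = φ_max` exactly when each `μ c` is `v` or `v + 1`. The number
of `c` with `μ c = v + 1` is then forced to be `n - m * v = w`.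
-/

/-- Ordered pairs of indices are split into those on which `f` differs (twice the number of
increasing ones) and those on which it agrees (a square for each fibre). -/
lemma two_mul_card_ne_add_sum_sq {α : Type*} [DecidableEq α] {n : ℕ} (f : Fin n → α)
    (S : Finset α) (hf : ∀ j, f j ∈ S) :
    2 * (Finset.univ.filter (fun p : Fin n × Fin n => p.1 < p.2 ∧ f p.1 ≠ f p.2)).card +
      ∑ c ∈ S, (Finset.univ.filter (fun j => f j = c)).card ^ 2 = n ^ 2 := by
  have hswap : (Finset.univ.filter (fun p : Fin n × Fin n => p.2 < p.1 ∧ f p.1 ≠ f p.2)).card =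
      (Finset.univ.filter (fun p : Fin n × Fin n => p.1 < p.2 ∧ f p.1 ≠ f p.2)).card := by
    refine Finset.card_bij (fun p _ => p.swap) ?_ ?_ ?_
    · intro p hp
      simp only [Finset.mem_filter, Finset.mem_univ, true_and, Prod.fst_swap, Prod.snd_swap] at hp ⊢
      exact ⟨hp.1, hp.2.symm⟩
    · intro p _ r _ h
      exact Prod.swap_injective h
    · intro p hp
      refine ⟨p.swap, ?_, Prod.swap_swap p⟩
      simp only [Finset.mem_filter, Finset.mem_univ, true_and, Prod.fst_swap, Prod.snd_swap] at hp ⊢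
      exact ⟨hp.1, hp.2.symm⟩
  have hne : (Finset.univ.filter (fun p : Fin n × Fin n => f p.1 ≠ f p.2)).card =
      2 * (Finset.univ.filter (fun p : Fin n × Fin n => p.1 < p.2 ∧ f p.1 ≠ f p.2)).card := by
    rw [two_mul]
    nth_rewrite 2 [← hswap]
    rw [← Finset.card_union_of_disjoint]
    · congr 1
      ext p
      simp only [Finset.mem_filter, Finset.mem_univ, true_and, Finset.mem_union]
      constructor
      · intro h
        have h' : p.1 ≠ p.2 := fun e => h (congrArg f e)
        rcases lt_or_gt_of_ne h' with h1 | h1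
        · exact Or.inl ⟨h1, h⟩
        · exact Or.inr ⟨h1, h⟩
      · rintro (h | h) <;> exact h.2
    · rw [Finset.disjoint_filter]
      rintro p _ h1 h2
      exact lt_asymm h1.1 h2.1
  have heq : (Finset.univ.filter (fun p : Fin n × Fin n => f p.1 = f p.2)).card =
      ∑ c ∈ S, (Finset.univ.filter (fun j => f j = c)).card ^ 2 := by
    rw [Finset.card_eq_sum_card_fiberwise (f := fun p => f p.1) (t := S) (fun p _ => hf p.1)]
    refine Finset.sum_congr rfl fun c _ => ?_
    rw [sq, ← Finset.card_product]
    congr 1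
    ext p
    simp only [Finset.mem_filter, Finset.mem_univ, true_and, Finset.mem_product]
    constructor
    · rintro ⟨h1, h2⟩
      exact ⟨h2, h1 ▸ h2⟩
    · rintro ⟨h1, h2⟩
      exact ⟨h1.trans h2.symm, h1⟩
  have htot := Finset.card_filter_add_card_filter_not (s := (Finset.univ : Finset (Fin n × Fin n)))
    (fun p => f p.1 = f p.2)
  rw [Finset.card_univ, Fintype.card_prod, Fintype.card_fin, heq] at htot
  rw [← hne, sq n, ← htot, add_comm]

lemma two_mul_choose_two (a : ℕ) : (2 * (a.choose 2 : ℤ)) = a * (a - 1) := by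
  have h := Nat.cast_choose_two ℚ a
  have h' : (2 * (a.choose 2 : ℚ)) = a * (a - 1) := by rw [h]; ring
  exact_mod_cast h'

/-- No truncation takes place in the natural-number expression for `φ_max`. -/
lemma le_choose_two (m v w : ℕ) (hw : w < m) :
    v * w + m * v.choose 2 ≤ (m * v + w).choose 2 := by
  have h1 := two_mul_choose_two v
  have h2 := two_mul_choose_two (m * v + w)
  zify
  push_cast at h2
  have key : 2 * ((v : ℤ) * w) + m * (v * (v - 1)) ≤ (m * v + w) * (m * v + w - 1) := by
    have hm : (0 : ℤ) ≤ m - 1 := by omega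
    have hv : (0 : ℤ) ≤ v := by omega
    rcases Nat.eq_zero_or_pos w with rfl | hw0
    · have : (0 : ℤ) ≤ m * v * (v * (m - 1)) := by positivity
      push_cast
      nlinarith
    · have hm2 : (0 : ℤ) ≤ m - 2 := by omega
      have hw1 : (0 : ℤ) ≤ w - 1 := by omega
      have a1 : (0 : ℤ) ≤ m * v * (v * (m - 1)) := by positivity
      have a2 : (0 : ℤ) ≤ w * v * (m - 2) := by positivity
      have a3 : (0 : ℤ) ≤ w * (w - 1) := by positivity
      have a4 : (0 : ℤ) ≤ (m : ℤ) * v * w := by positivity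
      nlinarith
  nlinarith

lemma consecutive_mul_nonneg (a : ℤ) : 0 ≤ a * (a - 1) := by
  rcases le_or_gt a 0 with h | h
  · exact mul_nonneg_of_nonpos_of_nonpos h (by omega)
  · exact mul_nonneg (by omega) (by omega)

/-- The extremal characterisation for a family `μ` of multiplicities with total `m * v + w`. -/
lemma extremal_iff {α : Type*} (S : Finset α) (μ : α → ℕ) (m v w D : ℕ)
    (hS : S.card = m) (hw : w < m) (hsum : ∑ c ∈ S, μ c = m * v + w)
    (hD : 2 * D + ∑ c ∈ S, μ c ^ 2 = (m * v + w) ^ 2) :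
    D = (m * v + w).choose 2 - v * w - m * v.choose 2 ↔
      (∀ c ∈ S, μ c = v ∨ μ c = v + 1) ∧ (S.filter (fun c => μ c = v + 1)).card = w := by
  have hle := le_choose_two m v w hw
  have h1 := two_mul_choose_two v
  have h2 := two_mul_choose_two (m * v + w)
  have hexp : ∑ c ∈ S, ((μ c : ℤ) - v) * ((μ c : ℤ) - v - 1) =
      ∑ c ∈ S, (μ c : ℤ) ^ 2 - (2 * v + 1) * ∑ c ∈ S, (μ c : ℤ) + m * (v * (v + 1)) := by
    rw [Finset.mul_sum, ← Finset.sum_sub_distrib, ← hS, ← nsmul_eq_mul, ← Finset.sum_const,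
      ← Finset.sum_add_distrib]
    exact Finset.sum_congr rfl fun c _ => by ring
  zify at hsum hD
  push_cast at h2
  have hdef : ∑ c ∈ S, ((μ c : ℤ) - v) * ((μ c : ℤ) - v - 1) =
      2 * (((m * v + w).choose 2 : ℤ) - v * w - m * v.choose 2 - D) := by
    rw [hexp, hsum]
    linear_combination hD - h2 + (m : ℤ) * h1
  have hfirst : D = (m * v + w).choose 2 - v * w - m * v.choose 2 ↔
      ∀ c ∈ S, μ c = v ∨ μ c = v + 1 := by
    have hz : D = (m * v + w).choose 2 - v * w - m * v.choose 2 ↔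
        ∑ c ∈ S, ((μ c : ℤ) - v) * ((μ c : ℤ) - v - 1) = 0 := by
      rw [hdef, Nat.sub_sub, eq_tsub_iff_add_eq_of_le hle]
      zify
      constructor <;> intro h <;> linarith
    rw [hz, Finset.sum_eq_zero_iff_of_nonneg fun c _ => consecutive_mul_nonneg _]
    refine forall₂_congr fun c _ => ?_
    rw [mul_eq_zero]
    omega
  rw [hfirst]
  refine ⟨fun h => ⟨h, ?_⟩, fun h => h.1⟩
  have hs : ∑ c ∈ S, μ c = ∑ c ∈ S, (v + if μ c = v + 1 then 1 else 0) := by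
    refine Finset.sum_congr rfl fun c hc => ?_
    rcases h c hc with e | e <;> simp [e]
  rw [Finset.sum_add_distrib, Finset.sum_const, smul_eq_mul, hS, ← Finset.card_filter] at hs
  zify at hs ⊢
  linarith

/-- Corollary 3 (case `n > 2^q - 1`): the number of unordered pairs of distinct
columns of the generator matrix `X` achieves the bound `φ_max` iff the multiset of
columns consists of `v + 1` copies of each of `w` nonzero vectors and `v` copies of
each of the remaining `2^q - 1 - w` nonzero vectors, where `v = n / (2^q - 1)` and
`w = n % (2^q - 1)`. -/
theorem stmt6 (q n : ℕ) (hq : 1 ≤ q) (hn : 2 ^ q - 1 < n)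
    (X : Matrix (Fin q) (Fin n) (ZMod 2))
    (hX : ∀ j : Fin n, (fun i => X i j) ≠ 0) :
    (Finset.univ.filter
        (fun p : Fin n × Fin n =>
          p.1 < p.2 ∧ (fun i => X i p.1) ≠ (fun i => X i p.2))).card =
      Nat.choose n 2 - (n / (2 ^ q - 1)) * (n % (2 ^ q - 1)) -
        (2 ^ q - 1) * Nat.choose (n / (2 ^ q - 1)) 2 ↔
    ((∀ c : Fin q → ZMod 2, c ≠ 0 →
        (Finset.univ.filter (fun j : Fin n => (fun i => X i j) = c)).card = n / (2 ^ q - 1) ∨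
        (Finset.univ.filter (fun j : Fin n => (fun i => X i j) = c)).card = n / (2 ^ q - 1) + 1) ∧
      (Finset.univ.filter (fun c : Fin q → ZMod 2 => c ≠ 0 ∧
        (Finset.univ.filter (fun j : Fin n => (fun i => X i j) = c)).card =
          n / (2 ^ q - 1) + 1)).card = n % (2 ^ q - 1)) := by
  have hpow : 2 ≤ 2 ^ q := by
    calc 2 = 2 ^ 1 := rfl
      _ ≤ 2 ^ q := Nat.pow_le_pow_right (by norm_num) hq
  have hdm : (2 ^ q - 1) * (n / (2 ^ q - 1)) + n % (2 ^ q - 1) = n := Nat.div_add_mod _ _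
  have hw : n % (2 ^ q - 1) < 2 ^ q - 1 := Nat.mod_lt _ (by omega)
  set S : Finset (Fin q → ZMod 2) := Finset.univ.filter (fun c => c ≠ 0) with hSdef
  have hS : S.card = 2 ^ q - 1 := by
    rw [hSdef, Finset.filter_ne', Finset.card_erase_of_mem (Finset.mem_univ _), Finset.card_univ]
    simp [ZMod.card]
  have hmem : ∀ j : Fin n, (fun i => X i j) ∈ S := fun j => by simpa [hSdef] using hX j
  have hD := two_mul_card_ne_add_sum_sq (fun j i => X i j) S hmem
  have hsum : ∑ c ∈ S, (Finset.univ.filter (fun j : Fin n => (fun i => X i j) = c)).card = n := by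
    rw [← Finset.card_eq_sum_card_fiberwise (fun j _ => hmem j), Finset.card_univ,
      Fintype.card_fin]
  have key := extremal_iff S
    (fun c => (Finset.univ.filter (fun j : Fin n => (fun i => X i j) = c)).card)
    (2 ^ q - 1) (n / (2 ^ q - 1)) (n % (2 ^ q - 1)) _ hS hw (by rw [hdm]; exact hsum)
    (by rw [hdm]; exact hD)
  rw [hdm] at key
  rw [key, hSdef, Finset.filter_filter]
  simp only [Finset.mem_filter, Finset.mem_univ, true_and]
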